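/- For every a ∈ F_{q^2}^*, the sum Q = Σ_{x∈F_{q^2}} χ(ax)·η(Tr_{q/r}(x^{q+1})) satisfies: Q = 0 if Tr_{q/r}(a^{q+1}) = 0, and Q = −q·η(−Tr_{q/r}(a^{q+1})) if Tr_{q/r}(a^{q+1}) ≠ 0. -/

import Mathlib

open Finset

/-!
Expand `η(Tr(N x))` in Gauss sums: `G(η⁻¹, ψ) η(c) = ∑ y, η⁻¹(y) ψ(y c)`. After exchanging the
sums, the inner sum over `x` has the argument `Tr(y N x + Tr(a x))`, and completing the square for
the norm form, `N x + Tr(a x) = N(x + a^q) - N a`, reduces it to `∑ x, ψ(N x) = -q`: the norm is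
surjective on units with fibres of size `q + 1`. What remains is a Gauss sum for `η`, which cancels
against `G(η⁻¹, ψ)` because `η` is quadratic.
-/

section SumOverFibres

variable {M : Type*} [AddCommMonoid M]

theorem sum_comp_eq_natCard_ker_nsmul_sum {G H : Type*} [Group G] [Fintype G] [Group H] [Fintype H]
    {f : G →* H} (hf : Function.Surjective f) (F : H → M) :
    ∑ g, F (f g) = Nat.card f.ker • ∑ h, F h := by
  classical
  have card_fibre (h : H) : #{g | f g = h} = Nat.card f.ker := by
    rw [MonoidHom.card_fiber_eq_of_mem_range f (hf h) (hf 1), ← Fintype.card_subtype,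
      ← Nat.card_eq_fintype_card]
    rfl
  rw [sum_comp F f, image_univ_of_surjective hf]
  simp_rw [card_fibre, smul_sum]

theorem sum_eq_apply_zero_add_sum_units {K : Type*} [GroupWithZero K] [Fintype K] [Fintype Kˣ]
    (f : K → M) : ∑ x, f x = f 0 + ∑ u : Kˣ, f u := by
  classical
  rw [← add_sum_erase _ f (mem_univ 0), ← unitsEquivNeZero.symm.sum_comp fun u : Kˣ ↦ f u]
  congr 1
  exact sum_subtype _ (by simp) _

end SumOverFibres

section QuadraticExtension

variable {K L : Type*} [Field K] [Fintype K] [Field L] [Algebra K L]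

theorem isQuadraticExtension_of_card_eq_sq [Fintype L]
    (h : Fintype.card L = Fintype.card K ^ 2) : Algebra.IsQuadraticExtension K L where
  finrank_eq_two' :=
    Nat.pow_right_injective (Fintype.one_lt_card (α := K)) <|
      (Module.card_eq_pow_finrank (K := K) (V := L)).symm.trans h

open FiniteField

variable [Algebra.IsQuadraticExtension K L]

section Conjugation

variable [Finite L]

variable (K) in
theorem algebraMap_norm_eq_mul_frobenius (x : L) :
    algebraMap K L (Algebra.norm K x) = x * frobeniusAlgHom K L x := by
  simp [algebraMap_norm_eq_prod_pow, Algebra.IsQuadraticExtension.finrank_eq_two, prod_range_succ]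

variable (K) in
theorem algebraMap_trace_eq_add_frobenius (x : L) :
    algebraMap K L (Algebra.trace K L x) = x + frobeniusAlgHom K L x := by
  simp [algebraMap_trace_eq_sum_pow, Algebra.IsQuadraticExtension.finrank_eq_two, sum_range_succ]

variable (K) in
theorem frobenius_frobenius_of_isQuadraticExtension (x : L) :
    frobeniusAlgHom K L (frobeniusAlgHom K L x) = x := by
  have sq_eq_one := pow_orderOf_eq_one (frobeniusAlgHom K L)
  rw [orderOf_frobeniusAlgHom, Algebra.IsQuadraticExtension.finrank_eq_two, sq] at sq_eq_one
  exact DFunLike.congr_fun sq_eq_one x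

theorem norm_add_trace_mul (a x : L) :
    Algebra.norm K x + Algebra.trace K L (a * x) =
      Algebra.norm K (x + frobeniusAlgHom K L a) - Algebra.norm K a := by
  apply (algebraMap K L).injective
  simp only [map_add, map_sub, map_mul, algebraMap_norm_eq_mul_frobenius,
    algebraMap_trace_eq_add_frobenius, frobenius_frobenius_of_isQuadraticExtension]
  ring

variable (K L) in
theorem natCard_ker_unitsMap_norm :
    Nat.card (Units.map (Algebra.norm K (S := L))).ker = Fintype.card K + 1 := by
  have hK : 1 < Fintype.card K := Fintype.one_lt_card
  have index_mul := (Units.map (Algebra.norm K (S := L))).ker.card_mul_index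
  rw [Subgroup.index_ker, MonoidHom.range_eq_top.2 (unitsMap_norm_surjective K L),
    Subgroup.card_top, Nat.card_units, Nat.card_units,
    Module.natCard_eq_pow_finrank (K := K) (V := L), Algebra.IsQuadraticExtension.finrank_eq_two,
    Nat.card_eq_fintype_card (α := K)] at index_mul
  apply Nat.eq_of_mul_eq_mul_right (Nat.sub_pos_of_lt hK)
  rw [index_mul, ← Nat.sq_sub_sq, one_pow]

end Conjugation

variable [Fintype L]

variable (L) in
theorem sum_comp_norm [Fintype Kˣ] {M : Type*} [AddCommMonoid M] (f : K → M) :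
    ∑ x : L, f (Algebra.norm K x) = f 0 + (Fintype.card K + 1) • ∑ u : Kˣ, f u := by
  classical
  rw [sum_eq_apply_zero_add_sum_units, Algebra.norm_zero, ← natCard_ker_unitsMap_norm K L,
    ← sum_comp_eq_natCard_ker_nsmul_sum (unitsMap_norm_surjective K L) fun u ↦ f u]
  rfl

variable {R : Type*} [CommRing R] [IsDomain R] {ψ : AddChar K R}

variable (L) in
theorem sum_addChar_norm (hψ : ψ ≠ 1) : ∑ x : L, ψ (Algebra.norm K x) = -(Fintype.card K : R) := by
  classical
  have sum_units : ∑ u : Kˣ, ψ u = -1 := by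
    have sum_zero := AddChar.sum_eq_zero_of_ne_one hψ
    rw [sum_eq_apply_zero_add_sum_units, AddChar.map_zero_eq_one] at sum_zero
    exact (neg_eq_of_add_eq_zero_right sum_zero).symm
  rw [sum_comp_norm, sum_units, AddChar.map_zero_eq_one, nsmul_eq_mul]
  push_cast
  ring

theorem sum_addChar_norm_add_trace_mul (hψ : ψ ≠ 1) (a : L) :
    ∑ x : L, ψ (Algebra.norm K x + Algebra.trace K L (a * x)) =
      -(Fintype.card K : R) * ψ (-Algebra.norm K a) := by
  simp_rw [norm_add_trace_mul, sub_eq_add_neg, AddChar.map_add_eq_mul, ← sum_mul]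
  rw [← sum_addChar_norm L hψ]
  congr 1
  exact Equiv.sum_comp (Equiv.addRight _) fun x ↦ ψ (Algebra.norm K x)

theorem sum_addChar_mul_norm_add_trace_mul (hψ : ψ ≠ 1) {y : K} (hy : y ≠ 0) (a : L) :
    ∑ x : L, ψ (y * Algebra.norm K x + Algebra.trace K L (a * x)) =
      -(Fintype.card K : R) * ψ (-(y⁻¹ * Algebra.norm K a)) := by
  have trace_eq (x : L) :
      Algebra.trace K L (a * x) = y * Algebra.trace K L (y⁻¹ • a * x) := by
    rw [smul_mul_assoc, map_smul, smul_eq_mul, mul_inv_cancel_left₀ hy]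
  have norm_eq : y * Algebra.norm K (y⁻¹ • a) = y⁻¹ * Algebra.norm K a := by
    rw [Algebra.smul_def, map_mul, Algebra.norm_algebraMap,
      Algebra.IsQuadraticExtension.finrank_eq_two]
    field_simp
  have sum_shift := sum_addChar_norm_add_trace_mul (AddChar.IsPrimitive.of_ne_one hψ hy) (y⁻¹ • a)
  simpa only [AddChar.mulShift_apply, mul_add, mul_neg, ← trace_eq, norm_eq] using sum_shift

end QuadraticExtension

section Characters

variable {F R : Type*} [Field F]

theorem addChar_comp_trace_ne_one {K : Type*} [Field K] [Algebra F K] [FiniteDimensional F K]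
    [Algebra.IsSeparable F K] [Monoid R] {ψ : AddChar F R} (hψ : ψ ≠ 1) :
    ψ.compAddMonoidHom (Algebra.trace F K).toAddMonoidHom ≠ 1 := by
  obtain ⟨c, hc⟩ := AddChar.ne_one_iff.1 hψ
  obtain ⟨x, rfl⟩ := Algebra.trace_surjective F K c
  exact AddChar.ne_one_iff.2 ⟨x, hc⟩

variable {K L : Type*} [Field K] [Fintype K] [Algebra F K] [Field L] [Fintype L] [Algebra K L]
  [Algebra F L] [IsScalarTower F K L] [Algebra.IsQuadraticExtension K L] [CommRing R]
  [IsDomain R] {ψ : AddChar F R}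

theorem sum_addChar_trace_mul_mulShift_trace_norm [Finite F] (hψ : ψ ≠ 1) {y : F} (hy : y ≠ 0)
    (a : L) :
    ∑ x : L, ψ (Algebra.trace F L (a * x)) *
        ψ.mulShift (Algebra.trace F K (Algebra.norm K x)) y =
      -(Fintype.card K : R) * ψ.mulShift (-Algebra.trace F K (Algebra.norm K a)) y⁻¹ := by
  have sum_lift := sum_addChar_mul_norm_add_trace_mul (addChar_comp_trace_ne_one (K := K) hψ)
    (y := algebraMap F K y) (by simpa using hy) a
  simp only [AddChar.compAddMonoidHom_apply, LinearMap.toAddMonoidHom_coe, map_neg, map_add,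
    ← Algebra.smul_def, ← map_inv₀, map_smul, smul_eq_mul, Algebra.trace_trace] at sum_lift
  simp_rw [AddChar.mulShift_apply, ← AddChar.map_add_eq_mul]
  rw [mul_comm _ y⁻¹, mul_neg, ← sum_lift]
  exact sum_congr rfl fun x _ ↦ by rw [add_comm, mul_comm y]

variable [Fintype F] {η : MulChar F R}

theorem gaussSum_mulShift_eq_of_ne_one (hη : η ≠ 1) (ψ : AddChar F R) (c : F) :
    gaussSum η (ψ.mulShift c) = η⁻¹ c * gaussSum η ψ := by
  obtain rfl | hc := eq_or_ne c 0
  · rw [AddChar.mulShift_zero, gaussSum_one_right hη, MulChar.map_zero, zero_mul]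
  · exact gaussSum_mulShift_eq η ψ (Units.mk0 c hc)

theorem gaussSum_inv_mul_sum_addChar_trace_mul_mulChar_trace_norm (hη : η ≠ 1) (hψ : ψ ≠ 1)
    (a : L) :
    gaussSum η⁻¹ ψ * ∑ x : L, ψ (Algebra.trace F L (a * x)) *
        η (Algebra.trace F K (Algebra.norm K x)) =
      -(Fintype.card K : R) *
        (η⁻¹ (-Algebra.trace F K (Algebra.norm K a)) * gaussSum η ψ) := by
  let T (x : L) : F := Algebra.trace F K (Algebra.norm K x)
  have gaussSum_mul (x : L) :
      gaussSum η⁻¹ ψ * (ψ (Algebra.trace F L (a * x)) * η (T x)) =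
        ∑ y, η⁻¹ y * (ψ (Algebra.trace F L (a * x)) * ψ.mulShift (T x) y) := by
    have shift := gaussSum_mulShift_eq_of_ne_one (inv_ne_one.2 hη) ψ (T x)
    rw [inv_inv] at shift
    rw [mul_left_comm, mul_comm (gaussSum _ _), ← shift, gaussSum, mul_sum]
    exact sum_congr rfl fun y _ ↦ mul_left_comm _ _ _
  have sum_x (y : F) :
      η⁻¹ y * ∑ x : L, ψ (Algebra.trace F L (a * x)) * ψ.mulShift (T x) y =
        -(Fintype.card K : R) * (η y⁻¹ * ψ.mulShift (-T a) y⁻¹) := by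
    obtain rfl | hy := eq_or_ne y 0
    · simp only [inv_zero, MulChar.map_zero, zero_mul, mul_zero]
    · rw [sum_addChar_trace_mul_mulShift_trace_norm hψ hy, MulChar.inv_apply', mul_left_comm]
  calc gaussSum η⁻¹ ψ * ∑ x : L, ψ (Algebra.trace F L (a * x)) * η (T x)
    _ = ∑ y, η⁻¹ y * ∑ x : L, ψ (Algebra.trace F L (a * x)) * ψ.mulShift (T x) y := by
      simp_rw [mul_sum, gaussSum_mul]
      exact sum_comm
    _ = -(Fintype.card K : R) * ∑ y, η y⁻¹ * ψ.mulShift (-T a) y⁻¹ := by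
      simp_rw [sum_x, mul_sum]
    _ = -(Fintype.card K : R) * gaussSum η (ψ.mulShift (-T a)) := by
      rw [gaussSum, ← Equiv.sum_comp (Equiv.inv F) fun y ↦ η y * ψ.mulShift (-T a) y]
      rfl
    _ = -(Fintype.card K : R) * (η⁻¹ (-T a) * gaussSum η ψ) := by
      rw [gaussSum_mulShift_eq_of_ne_one hη]

theorem sum_addChar_trace_mul_mulChar_trace_norm_of_isQuadratic (hF : (Fintype.card F : R) ≠ 0)
    (hη : η ≠ 1) (hηq : η.IsQuadratic) (hψ : ψ ≠ 1) (a : L) :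
    ∑ x : L, ψ (Algebra.trace F L (a * x)) * η (Algebra.trace F K (Algebra.norm K x)) =
      -(Fintype.card K : R) * η (-Algebra.trace F K (Algebra.norm K a)) := by
  have gauss_ne := gaussSum_ne_zero_of_nontrivial hF hη (AddChar.IsPrimitive.of_ne_one hψ)
  have gauss_mul := gaussSum_inv_mul_sum_addChar_trace_mul_mulChar_trace_norm (K := K) hη hψ a
  rw [hηq.inv] at gauss_mul
  apply mul_left_cancel₀ gauss_ne
  rw [gauss_mul]
  ring

theorem sum_addChar_trace_mul_quadraticChar_trace_norm [DecidableEq F] [CharZero R]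
    (hF : ringChar F ≠ 2) (hψ : ψ ≠ 1) (a : L) :
    ∑ x : L, ψ (Algebra.trace F L (a * x)) *
        (quadraticChar F (Algebra.trace F K (Algebra.norm K x)) : R) =
      -(Fintype.card K : R) * (quadraticChar F (-Algebra.trace F K (Algebra.norm K a)) : R) :=
  sum_addChar_trace_mul_mulChar_trace_norm_of_isQuadratic
    (η := (quadraticChar F).ringHomComp (Int.castRingHom R))
    (Nat.cast_ne_zero.2 Fintype.card_ne_zero)
    ((MulChar.ringHomComp_ne_one_iff (RingHom.injective_int _)).2 (quadraticChar_ne_one hF))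
    ((quadraticChar_isQuadratic F).comp _) hψ a

end Characters

theorem stdAddChar_eq_exp_val {n : ℕ} [NeZero n] (z : ZMod n) :
    ZMod.stdAddChar z = Complex.exp (2 * Real.pi * Complex.I * (z.val : ℂ) / (n : ℂ)) := by
  simpa using ZMod.stdAddChar_coe (N := n) (z.val : ℤ)

theorem stdAddChar_ne_one (n : ℕ) [NeZero n] [Nontrivial (ZMod n)] :
    (ZMod.stdAddChar : AddChar (ZMod n) ℂ) ≠ 1 := by
  simpa using ZMod.isPrimitive_stdAddChar n one_ne_zero

/-- For every `a ∈ F_{q^2}^*`, the sum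
`Q = Σ_{x∈F_{q^2}} χ(ax)·η(Tr_{q/r}(x^{q+1}))` satisfies: `Q = 0` if
`Tr_{q/r}(a^{q+1}) = 0`, and `Q = −q·η(−Tr_{q/r}(a^{q+1}))` if `Tr_{q/r}(a^{q+1}) ≠ 0`.
Here `N` records `N x = x^{q+1} ∈ F_q`, `η` is the quadratic character of `F_r`, and `χ`
is the canonical additive character of `F_{q^2}`. -/
theorem stmt14 (p t s : ℕ) [Fact p.Prime] (hp2 : Odd p) (ht : 0 < t) (hs : 0 < s)
    (Fr Fq Fq2 : Type) [Field Fr] [Fintype Fr] [DecidableEq Fr]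
    [Field Fq] [Fintype Fq] [Field Fq2] [Fintype Fq2]
    [Algebra (ZMod p) Fq2] [Algebra Fr Fq] [Algebra Fq Fq2]
    (hr : Fintype.card Fr = p ^ t) (hq : Fintype.card Fq = (p ^ t) ^ s)
    (hq2 : Fintype.card Fq2 = ((p ^ t) ^ s) ^ 2)
    (N : Fq2 → Fq) (hN : ∀ x : Fq2, algebraMap Fq Fq2 (N x) = x ^ (Fintype.card Fq + 1))
    (χ : Fq2 → ℂ)
    (hχ : ∀ x : Fq2, χ x = Complex.exp (2 * Real.pi * Complex.I *
      ((Algebra.trace (ZMod p) Fq2 x).val : ℂ) / (p : ℂ))) :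
    ∀ a : Fq2, a ≠ 0 →
      (Algebra.trace Fr Fq (N a) = 0 →
        ∑ x : Fq2, χ (a * x) * (quadraticChar Fr (Algebra.trace Fr Fq (N x)) : ℂ) = 0) ∧
      (Algebra.trace Fr Fq (N a) ≠ 0 →
        ∑ x : Fq2, χ (a * x) * (quadraticChar Fr (Algebra.trace Fr Fq (N x)) : ℂ) =
          -(((p : ℂ) ^ t) ^ s) *
            (quadraticChar Fr (- Algebra.trace Fr Fq (N a)) : ℂ)) := by
  have : Algebra.IsQuadraticExtension Fq Fq2 :=
    isQuadraticExtension_of_card_eq_sq (by rw [hq2, hq])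
  have hNorm (x : Fq2) : N x = Algebra.norm Fq x := (algebraMap Fq Fq2).injective <| by
    rw [hN, algebraMap_norm_eq_mul_frobenius, FiniteField.frobeniusAlgHom_apply, pow_succ']
  have : CharP Fr p := charP_of_card_eq_prime_pow hr
  have hFr : ringChar Fr ≠ 2 := ringChar.eq Fr p ▸ hp2.ne_two_of_dvd_nat dvd_rfl
  let _ : Algebra (ZMod p) Fr := ZMod.algebra Fr p
  let _ : Algebra Fr Fq2 := Algebra.compHom Fq2 (algebraMap Fr Fq)
  have : IsScalarTower Fr Fq Fq2 := .of_algebraMap_eq' rfl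
  have : IsScalarTower (ZMod p) Fr Fq2 := .of_algebraMap_eq' (Subsingleton.elim _ _)
  let ψ : AddChar Fr ℂ :=
    ZMod.stdAddChar.compAddMonoidHom (Algebra.trace (ZMod p) Fr).toAddMonoidHom
  have hχψ (x : Fq2) : χ x = ψ (Algebra.trace Fr Fq2 x) := by
    simp [ψ, hχ, Algebra.trace_trace, stdAddChar_eq_exp_val]
  intro a _
  have sum_eq := sum_addChar_trace_mul_quadraticChar_trace_norm (K := Fq) hFr (ψ := ψ)
    (addChar_comp_trace_ne_one (K := Fr) (stdAddChar_ne_one p)) a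
  simp_rw [← hχψ, ← hNorm, hq, Nat.cast_pow] at sum_eq
  exact ⟨fun trace_zero ↦ by rw [sum_eq, trace_zero]; simp, fun _ ↦ sum_eq⟩
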